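/- Under the interpolation setting, let B ⊆ {1,…,M} be a batch of size b, let w_i ≥ 0 for i ∈ B with Σ_{i∈B} w_i = 1, let η > 0, and set θ' = θ − η·Σ_{i∈B} w_i ∇f_i(θ). Then ‖θ' − θ*‖² ≤ ‖θ − θ*‖² + Σ_{i∈B} w_i·(4Lη²·b·w_i − 2η)·(f_i(θ) − f_i(θ*)). -/

import Mathlib

open scoped InnerProductSpace BigOperators

/-!
Along the step direction `G = ∑ w i • ∇f i θ`, expand
`‖θ - η G - θ*‖² = ‖θ - θ*‖² - 2η ⟪G, θ - θ*⟫ + η² ‖G‖²`.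
Convexity bounds the cross term below by `∑ w i (f i θ - f i θ*)`. By Cauchy–Schwarz `‖G‖²` is at
most `b ∑ w i² ‖∇f i θ‖²`, and since `θ*` minimizes each `f i` separately, a gradient step of
length `1 / L` on `f i` alone shows `‖∇f i θ‖² ≤ 2L (f i θ - f i θ*)`.
-/

section Smooth

variable {E : Type*} [NormedAddCommGroup E] [InnerProductSpace ℝ E] [CompleteSpace E]
  {f : E → ℝ} {L : ℝ} {x : E}

theorem hasDerivAt_comp_add_smul {v : E} {t : ℝ} (hf : DifferentiableAt ℝ f (x + t • v)) :
    HasDerivAt (fun s : ℝ => f (x + s • v)) ⟪gradient f (x + t • v), v⟫_ℝ t := by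
  have hline : HasDerivAt (fun s : ℝ => x + s • v) v t := by
    simpa using ((hasDerivAt_id t).smul_const v).const_add x
  rw [inner_gradient_left]
  exact hf.hasFDerivAt.comp_hasDerivAt t hline

theorem inner_gradient_add_smul_le (hLip : ∀ y, ‖gradient f y - gradient f x‖ ≤ L * ‖y - x‖)
    (v : E) {t : ℝ} (ht : 0 ≤ t) :
    ⟪gradient f (x + t • v), v⟫_ℝ ≤ ⟪gradient f x, v⟫_ℝ + L * ‖v‖ ^ 2 * t := by
  have hdiff : ‖gradient f (x + t • v) - gradient f x‖ ≤ L * (t * ‖v‖) := by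
    simpa only [add_sub_cancel_left, norm_smul, Real.norm_of_nonneg ht] using hLip (x + t • v)
  calc ⟪gradient f (x + t • v), v⟫_ℝ
      = ⟪gradient f x, v⟫_ℝ + ⟪gradient f (x + t • v) - gradient f x, v⟫_ℝ := by
        rw [inner_sub_left]; ring
    _ ≤ ⟪gradient f x, v⟫_ℝ + ‖gradient f (x + t • v) - gradient f x‖ * ‖v‖ := by
        gcongr; exact real_inner_le_norm _ _
    _ ≤ ⟪gradient f x, v⟫_ℝ + L * (t * ‖v‖) * ‖v‖ := by gcongr
    _ = ⟪gradient f x, v⟫_ℝ + L * ‖v‖ ^ 2 * t := by ring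

theorem apply_add_le_of_lipschitz_gradient (hf : Differentiable ℝ f)
    (hLip : ∀ y, ‖gradient f y - gradient f x‖ ≤ L * ‖y - x‖) (v : E) :
    f (x + v) ≤ f x + ⟪gradient f x, v⟫_ℝ + L / 2 * ‖v‖ ^ 2 := by
  have hline (t : ℝ) := hasDerivAt_comp_add_smul (hf (x + t • v))
  have hquad (t : ℝ) : HasDerivAt
      (fun s : ℝ => f x + s * ⟪gradient f x, v⟫_ℝ + L / 2 * ‖v‖ ^ 2 * s ^ 2)
      (⟪gradient f x, v⟫_ℝ + L * ‖v‖ ^ 2 * t) t := by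
    refine ((((hasDerivAt_id t).mul_const ⟪gradient f x, v⟫_ℝ).const_add (f x)).add
      ((hasDerivAt_pow 2 t).const_mul (L / 2 * ‖v‖ ^ 2))).congr_deriv ?_
    push_cast
    ring
  have hle := image_le_of_deriv_right_le_deriv_boundary (a := 0) (b := 1)
    (fun t _ => (hline t).continuousAt.continuousWithinAt)
    (fun t _ => (hline t).hasDerivWithinAt) (by simp)
    (fun t _ => (hquad t).continuousAt.continuousWithinAt)
    (fun t _ => (hquad t).hasDerivWithinAt)
    (fun t ht => inner_gradient_add_smul_le hLip v ht.1)
    (Set.right_mem_Icc.2 zero_le_one)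
  simpa using hle

theorem norm_gradient_sq_le_two_mul_sub (hL : 0 < L) (hf : Differentiable ℝ f)
    (hLip : ∀ y, ‖gradient f y - gradient f x‖ ≤ L * ‖y - x‖) {m : ℝ} (hm : ∀ y, m ≤ f y) :
    ‖gradient f x‖ ^ 2 ≤ 2 * L * (f x - m) := by
  -- The step `-L⁻¹ • ∇f x` minimizes the quadratic upper bound.
  have hdecrease : m ≤ f x - ‖gradient f x‖ ^ 2 / (2 * L) :=
    calc m ≤ f (x + -L⁻¹ • gradient f x) := hm _
      _ ≤ f x + ⟪gradient f x, -L⁻¹ • gradient f x⟫_ℝ + L / 2 * ‖-L⁻¹ • gradient f x‖ ^ 2 :=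
          apply_add_le_of_lipschitz_gradient hf hLip _
      _ = f x - ‖gradient f x‖ ^ 2 / (2 * L) := by
          rw [real_inner_smul_right, real_inner_self_eq_norm_sq, norm_smul, mul_pow,
            Real.norm_eq_abs, sq_abs]
          field_simp
          ring
  rw [mul_comm, ← div_le_iff₀ (by positivity)]
  linarith

end Smooth

theorem norm_sum_sq_le_card_mul_sum_norm_sq {ι E : Type*} [SeminormedAddCommGroup E]
    (s : Finset ι) (v : ι → E) : ‖∑ i ∈ s, v i‖ ^ 2 ≤ s.card * ∑ i ∈ s, ‖v i‖ ^ 2 :=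
  calc ‖∑ i ∈ s, v i‖ ^ 2 ≤ (∑ i ∈ s, ‖v i‖) ^ 2 := by gcongr; exact norm_sum_le s v
    _ ≤ s.card * ∑ i ∈ s, ‖v i‖ ^ 2 := sq_sum_le_card_mul_sum_sq

section Batch

variable {ι E : Type*} [NormedAddCommGroup E] [InnerProductSpace ℝ E] {B : Finset ι}
  {w δ : ι → ℝ} {g : ι → E}

theorem norm_sum_smul_sq_le_of_norm_sq_le {C : ℝ} (hg : ∀ i ∈ B, ‖g i‖ ^ 2 ≤ C * δ i) :
    ‖∑ i ∈ B, w i • g i‖ ^ 2 ≤ B.card * ∑ i ∈ B, w i ^ 2 * (C * δ i) := by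
  refine (norm_sum_sq_le_card_mul_sum_norm_sq B _).trans ?_
  gcongr with i hi
  rw [norm_smul, mul_pow, Real.norm_eq_abs, sq_abs]
  gcongr
  exact hg i hi

theorem sum_mul_le_inner_sum_smul {u : E} (hw : ∀ i ∈ B, 0 ≤ w i)
    (hδ : ∀ i ∈ B, δ i ≤ ⟪g i, u⟫_ℝ) :
    ∑ i ∈ B, w i * δ i ≤ ⟪∑ i ∈ B, w i • g i, u⟫_ℝ := by
  simp only [sum_inner, real_inner_smul_left]
  exact Finset.sum_le_sum fun i hi => mul_le_mul_of_nonneg_left (hδ i hi) (hw i hi)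

theorem norm_sub_smul_sum_smul_sq_le {C η : ℝ} {u : E} (hw : ∀ i ∈ B, 0 ≤ w i) (hη : 0 ≤ η)
    (hg : ∀ i ∈ B, ‖g i‖ ^ 2 ≤ C * δ i) (hδ : ∀ i ∈ B, δ i ≤ ⟪g i, u⟫_ℝ) :
    ‖u - η • ∑ i ∈ B, w i • g i‖ ^ 2
      ≤ ‖u‖ ^ 2 + ∑ i ∈ B, w i * (C * η ^ 2 * B.card * w i - 2 * η) * δ i := by
  set G := ∑ i ∈ B, w i • g i
  calc ‖u - η • G‖ ^ 2 = ‖u‖ ^ 2 - 2 * η * ⟪G, u⟫_ℝ + η ^ 2 * ‖G‖ ^ 2 := by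
        rw [norm_sub_sq_real, real_inner_smul_right, real_inner_comm, norm_smul, mul_pow,
          Real.norm_eq_abs, sq_abs]
        ring
    _ ≤ ‖u‖ ^ 2 - 2 * η * ∑ i ∈ B, w i * δ i
          + η ^ 2 * (B.card * ∑ i ∈ B, w i ^ 2 * (C * δ i)) := by
        gcongr
        · exact sum_mul_le_inner_sum_smul hw hδ
        · exact norm_sum_smul_sq_le_of_norm_sq_le hg
    _ = ‖u‖ ^ 2 + ∑ i ∈ B, w i * (C * η ^ 2 * B.card * w i - 2 * η) * δ i := by
        rw [sub_add, sub_eq_add_neg, add_right_inj, neg_sub]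
        simp only [Finset.mul_sum, ← Finset.sum_sub_distrib]
        exact Finset.sum_congr rfl fun i _ => by ring

end Batch

theorem stmt_6_general {ι E : Type*} [NormedAddCommGroup E] [InnerProductSpace ℝ E]
    [CompleteSpace E] {L : ℝ} (hL : 0 < L) {f : ι → E → ℝ} {B : Finset ι} {θ θstar : E}
    (hdiff : ∀ i ∈ B, Differentiable ℝ (f i))
    (hconv : ∀ i ∈ B, f i θ + ⟪gradient (f i) θ, θstar - θ⟫_ℝ ≤ f i θstar)
    (hsmooth : ∀ i ∈ B, ∀ y, ‖gradient (f i) y - gradient (f i) θ‖ ≤ L * ‖y - θ‖)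
    (hinterp : ∀ i ∈ B, ∀ y, f i θstar ≤ f i y)
    {w : ι → ℝ} (hw : ∀ i ∈ B, 0 ≤ w i) {η : ℝ} (hη : 0 ≤ η) :
    ‖θ - η • ∑ i ∈ B, w i • gradient (f i) θ - θstar‖ ^ 2
      ≤ ‖θ - θstar‖ ^ 2
        + ∑ i ∈ B, w i * (2 * L * η ^ 2 * B.card * w i - 2 * η) * (f i θ - f i θstar) := by
  have hgrad : ∀ i ∈ B, ‖gradient (f i) θ‖ ^ 2 ≤ 2 * L * (f i θ - f i θstar) := fun i hi =>
    norm_gradient_sq_le_two_mul_sub hL (hdiff i hi) (hsmooth i hi) (hinterp i hi)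
  have hgap : ∀ i ∈ B, f i θ - f i θstar ≤ ⟪gradient (f i) θ, θ - θstar⟫_ℝ := fun i hi => by
    have hsupport := hconv i hi
    rw [← neg_sub θ θstar, inner_neg_right] at hsupport
    linarith
  rw [sub_right_comm]
  exact norm_sub_smul_sum_smul_sq_le hw hη hgrad hgap

/-- One step of reweighted minibatch gradient descent under the interpolation
regime: basic descent inequality (any step size `η > 0`). -/
theorem stmt_6 {d M : ℕ} (L : ℝ) (hL : 0 < L)
    (f : Fin M → EuclideanSpace ℝ (Fin d) → ℝ)
    (hdiff : ∀ i, Differentiable ℝ (f i))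
    (hconv : ∀ i, ∀ θ₁ θ₂ : EuclideanSpace ℝ (Fin d),
      f i θ₂ + ⟪gradient (f i) θ₂, θ₁ - θ₂⟫_ℝ ≤ f i θ₁)
    (hsmooth : ∀ i, ∀ θ θ' : EuclideanSpace ℝ (Fin d),
      ‖gradient (f i) θ - gradient (f i) θ'‖ ≤ L * ‖θ - θ'‖)
    (θstar : EuclideanSpace ℝ (Fin d))
    (hinterp : ∀ i θ, f i θstar ≤ f i θ)
    (B : Finset (Fin M)) (b : ℕ) (hb : B.card = b)
    (w : Fin M → ℝ)
    (hw0 : ∀ i ∈ B, 0 ≤ w i)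
    (hw1 : ∑ i ∈ B, w i = 1)
    (η : ℝ) (hη0 : 0 < η)
    (θ θ' : EuclideanSpace ℝ (Fin d))
    (hupd : θ' = θ - η • ∑ i ∈ B, w i • gradient (f i) θ) :
    ‖θ' - θstar‖ ^ 2
      ≤ ‖θ - θstar‖ ^ 2
        + ∑ i ∈ B, w i * (4 * L * η ^ 2 * (b : ℝ) * w i - 2 * η)
            * (f i θ - f i θstar) := by
  -- The factor `4` is not sharp: regard the `L`-Lipschitz gradients as `2L`-Lipschitz.
  rw [hupd, ← hb, show 4 * L = 2 * (2 * L) by ring]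
  exact stmt_6_general (by positivity) (fun i _ => hdiff i) (fun i _ => hconv i θstar θ)
    (fun i _ y => (hsmooth i y θ).trans (by gcongr; linarith)) (fun i _ => hinterp i) hw0 hη0.le
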